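/- arXiv:1809.09158 — 4 statements merged into one kernel-verified Lean document; each statement's English description precedes it below -/
import Mathlib

section
/- Let (H₁,…,H_k) be a valid hook configuration of a word w = w₁⋯w_m. If the points (i, w_i) and (j, w_j) are given the same color in the coloring of the plot of w induced by the configuration and i < j, then w_i < w_j. -/
/-- The `i`-th entry (1-indexed) of the word `w`, i.e. the height of the point
`(i, w_i)` of the plot of `w`. -/
def entry (w : List ℕ) (i : ℕ) : ℕ := w.getD (i - 1) 0

/-- A hook of `w`: a pair of points `(i, w_i)` (the southwest endpoint) and
`(j, w_j)` (the northeast endpoint) of the plot of `w` with `i < j` and `w_i ≤ w_j`.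
We record a hook as the pair `(i, j)` of indices (1-indexed). -/
def IsHook (w : List ℕ) (h : ℕ × ℕ) : Prop :=
  1 ≤ h.1 ∧ h.1 < h.2 ∧ h.2 ≤ w.length ∧ entry w h.1 ≤ entry w h.2

/-- `d` is a descent of `w`: `1 ≤ d ≤ m - 1` and `w_d ≥ w_{d+1}`. -/
def IsDescent (w : List ℕ) (d : ℕ) : Prop :=
  1 ≤ d ∧ d + 1 ≤ w.length ∧ entry w (d + 1) ≤ entry w d

/-- `H = (H₁, …, H_k)` is a valid hook configuration of `w`:
(1) the southwest endpoints have strictly increasing indices `i₁ < ⋯ < i_k`;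
(2) each descent top of `w` is the southwest endpoint of a hook;
(3) each point that is the northeast endpoint of a hook is the northeast endpoint
of a descent hook and also of a small hook;
(4) the open intervals `(i_u, j_u)` are pairwise disjoint or nested. -/
def IsVHC (w : List ℕ) (H : List (ℕ × ℕ)) : Prop :=
  (∀ h ∈ H, IsHook w h) ∧
  (H.map Prod.fst).Pairwise (· < ·) ∧
  (∀ d : ℕ, IsDescent w d → ∃ h ∈ H, h.1 = d) ∧
  (∀ j : ℕ, (∃ h ∈ H, h.2 = j) →
      (∃ h ∈ H, h.2 = j ∧ IsDescent w h.1) ∧ (∃ h ∈ H, h.2 = j ∧ h.2 = h.1 + 1)) ∧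
  (∀ h ∈ H, ∀ h' ∈ H,
      (Set.Ioo h.1 h.2 : Set ℕ) ∩ Set.Ioo h'.1 h'.2 = ∅ ∨
      (Set.Ioo h.1 h.2 : Set ℕ) ⊆ Set.Ioo h'.1 h'.2 ∨
      (Set.Ioo h'.1 h'.2 : Set ℕ) ⊆ Set.Ioo h.1 h.2)

/-- The point `(a, w_a)` "sees" the hook `h` when it looks up: either `(a, w_a)`
lies strictly below `h`, or `(a, w_a)` is the northeast endpoint of `h`. -/
def seesHook (w : List ℕ) (h : ℕ × ℕ) (a : ℕ) : Prop :=
  (h.1 < a ∧ a < h.2 ∧ entry w a ≤ entry w h.2) ∨ a = h.2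

instance (w : List ℕ) (h : ℕ × ℕ) (a : ℕ) : Decidable (seesHook w h a) := by
  unfold seesHook; infer_instance

/-- The color that the point `(a, w_a)` receives in the coloring induced by the
configuration `H = (H₁, …, H_k)` (indices of hooks are 1-based): among all hooks
that the point sees, it receives the color of the one whose southwest endpoint is
rightmost (for a valid hook configuration, this is the hook with the largest index,
since `i₁ < ⋯ < i_k`); if it sees no hook, it receives the color `0` (blue). -/
def colorOf (w : List ℕ) (H : List (ℕ × ℕ)) (a : ℕ) : ℕ :=
  ((Finset.range H.length).filter fun u => seesHook w (H.getD u (0, 0)) a).sup (· + 1)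

/-- `C_{q^H} = C_{q₀} C_{q₁} ⋯ C_{q_k}`, where `q^H = (q₀, …, q_k)` is the
composition induced by the configuration `H = (H₁, …, H_k)` of `w`: `q_t` is the
number of points of the plot of `w` colored `t` in the induced coloring, and
`C_n` is the `n`-th Catalan number. -/
def CatComp (w : List ℕ) (H : List (ℕ × ℕ)) : ℕ :=
  ∏ t ∈ Finset.range (H.length + 1),
    catalan (((Finset.Icc 1 w.length).filter fun a => colorOf w H a = t).card)

/-- `H` is a binary valid hook configuration: each point is the northeast endpoint
of at most two hooks. -/
def IsBinaryVHC (w : List ℕ) (H : List (ℕ × ℕ)) : Prop :=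
  IsVHC w H ∧ ∀ j : ℕ, (H.countP fun h => h.2 == j) ≤ 2

/-- `H_R(w)`: the set of binary valid hook configurations of `w` in which every
horizontal hook is small. -/
def HR (w : List ℕ) : Set (List (ℕ × ℕ)) :=
  {H | IsBinaryVHC w H ∧ ∀ h ∈ H, entry w h.1 = entry w h.2 → h.2 = h.1 + 1}

/-- `H_L(w)`: the set of binary valid hook configurations of `w` in which no small
horizontal hook has the same northeast endpoint as another hook. -/
def HL (w : List ℕ) : Set (List (ℕ × ℕ)) :=
  {H | IsBinaryVHC w H ∧ ∀ h ∈ H, h.2 = h.1 + 1 → entry w h.1 = entry w h.2 →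
      ∀ h' ∈ H, h' ≠ h → h'.2 ≠ h.2}

lemma exists_sees (w : List ℕ) (H : List (ℕ × ℕ))
    (hH : IsVHC w H) (i j : ℕ) (hi : 1 ≤ i) (hij : i < j) (hj : j ≤ w.length)
    (hle : entry w j ≤ entry w i) : ∃ h ∈ H, i ≤ h.1 ∧ seesHook w h j := by
  obtain ⟨h1, h2, h3, h4, h5⟩ := hH
  by_cases hne : ∃ h ∈ H, h.2 = j
  · obtain ⟨-, h, hh, e1, e2⟩ := h4 j hne
    exact ⟨h, hh, by omega, Or.inr e1.symm⟩
  · let P : ℕ → Prop := fun d => i ≤ d ∧ d < j ∧ entry w j ≤ entry w d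
    classical
    have hPi : P i := ⟨le_rfl, hij, hle⟩
    obtain ⟨d, hd, hmax⟩ : ∃ d, P d ∧ ∀ e, P e → e ≤ d :=
      ⟨Nat.findGreatest P j, Nat.findGreatest_spec hij.le hPi,
        fun e he => Nat.le_findGreatest he.2.1.le he⟩
    obtain ⟨d1, d2, d3⟩ := hd
    have hdesc : IsDescent w d := by
      refine ⟨by omega, by omega, ?_⟩
      by_contra hc
      by_cases hdj : d + 1 = j
      · rw [hdj] at hc; omega
      · have := hmax (d + 1) ⟨by omega, by omega, by omega⟩
        omega
    obtain ⟨h, hh, rfl⟩ := h3 d hdesc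
    obtain ⟨k1, k2, k3, k4⟩ := h1 h hh
    refine ⟨h, hh, d1, Or.inl ⟨d2, ?_, by omega⟩⟩
    by_contra hc
    have hne' : h.2 ≠ j := fun e => hne ⟨h, hh, e⟩
    have := hmax h.2 ⟨by omega, by omega, by omega⟩
    omega

/-- Let `(H₁, …, H_k)` be a valid hook configuration of a word `w = w₁ ⋯ w_m`.
If the points `(i, w_i)` and `(j, w_j)` are given the same color in the induced
coloring of the plot of `w` and `i < j`, then `w_i < w_j`. -/
theorem colors_increase (w : List ℕ) (hw : 0 ∉ w) (H : List (ℕ × ℕ))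
    (hH : IsVHC w H) (i j : ℕ) (hi : 1 ≤ i) (hij : i < j) (hj : j ≤ w.length)
    (hcolor : colorOf w H i = colorOf w H j) :
    entry w i < entry w j := by
  by_contra hc
  obtain ⟨h, hh, hih, hs⟩ := exists_sees w H hH i j hi hij hj (by omega)
  obtain ⟨u, hu, rfl⟩ := List.getElem_of_mem hh
  have h1 : u + 1 ≤ colorOf w H j := by
    unfold colorOf
    refine Finset.le_sup (f := fun x => x + 1) (b := u) ?_
    simp only [Finset.mem_filter, Finset.mem_range]
    exact ⟨hu, by rwa [List.getD_eq_getElem _ _ hu]⟩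
  rw [← hcolor] at h1
  unfold colorOf at h1
  rw [Finset.le_sup_iff (by simp)] at h1
  obtain ⟨v, hv, huv⟩ := h1
  simp only [Finset.mem_filter, Finset.mem_range] at hv
  obtain ⟨hv, hsv⟩ := hv
  rw [List.getD_eq_getElem _ _ hv] at hsv
  have hk := hH.1 _ (List.getElem_mem hv)
  have hmono : (H[u]).1 ≤ (H[v]).1 := by
    rcases (show u ≤ v by omega).eq_or_lt with rfl | hlt
    · exact le_rfl
    · have := List.pairwise_iff_getElem.1 hH.2.1 u v (by simpa using hu) (by simpa using hv) hlt
      simp only [List.getElem_map] at this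
      exact this.le
  obtain ⟨k1, k2, k3, k4⟩ := hk
  rcases hsv with hsv | hsv
  · omega
  · omega
end

section
/- For nonnegative integers c₁,…,c_n, let M(c₁,…,c_n) denote the number of words in W_{(c₁,…,c_n)} that avoid the pattern 231. Then M(c₁) = 1 for every nonnegative integer c₁, and for n ≥ 2: if c₂ ≥ 1, then M(c₁,…,c_n) = M(c₁+c₂, c₃,…,c_n) + Σ_{r=1}^{c₁} M(r, c₂−1, c₃,…,c_n), and if c₂ = 0, then M(c₁,…,c_n) = M(c₁, c₃,…,c_n). -/
/-- Membership in `W_c`: `w` is a word over the positive integers with exactly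
`cᵢ` copies of the letter `i` for each `1 ≤ i ≤ n = c.length` (and no other letters). -/
def InW (c : List ℕ) (w : List ℕ) : Prop :=
  0 ∉ w ∧ ∀ i : ℕ, w.count (i + 1) = c.getD i 0

/-- The identity word `Id_c = 1^{c₁} 2^{c₂} ⋯ n^{c_n}`, the unique word in `W_c`
whose letters are nondecreasing from left to right. -/
def idWord (c : List ℕ) : List ℕ :=
  ((List.range c.length).map fun i => List.replicate (c.getD i 0) (i + 1)).flatten

/-- `w` contains the pattern `231`: there are indices `a < b < c` with
`w_c < w_a < w_b`. -/
def Contains231 (w : List ℕ) : Prop :=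
  ∃ a b c : ℕ, a < b ∧ b < c ∧ c < w.length ∧
    w.getD c 0 < w.getD a 0 ∧ w.getD a 0 < w.getD b 0

/-- `w` contains the pattern `221`: there are indices `a < b < c` with
`w_c < w_a = w_b`. -/
def Contains221 (w : List ℕ) : Prop :=
  ∃ a b c : ℕ, a < b ∧ b < c ∧ c < w.length ∧
    w.getD c 0 < w.getD a 0 ∧ w.getD a 0 = w.getD b 0

/-- `M(c₁, …, c_n)`: the number of words in `W_{(c₁, …, c_n)}` avoiding the
pattern `231`. -/
noncomputable def Mcount (c : List ℕ) : ℕ :=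
  {w : List ℕ | InW c w ∧ ¬Contains231 w}.ncard

lemma contains_iff (w : List ℕ) : Contains231 w ↔
    ∃ a b c : ℕ, [a, b, c].Sublist w ∧ c < a ∧ a < b := by
  constructor
  · rintro ⟨i, j, k, hij, hjk, hk, h1, h2⟩
    refine ⟨w.getD i 0, w.getD j 0, w.getD k 0, ?_, h1, h2⟩
    rw [List.sublist_iff_exists_fin_orderEmbedding_get_eq]
    have hmono : StrictMono (![⟨i, by omega⟩, ⟨j, by omega⟩, ⟨k, hk⟩] : Fin 3 → Fin w.length) := by
      intro x y hxy
      fin_cases x <;> fin_cases y <;> simp_all [Fin.lt_def] <;> omega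
    refine ⟨OrderEmbedding.ofStrictMono _ hmono, ?_⟩
    intro x
    have hi : i < w.length := by omega
    have hj : j < w.length := by omega
    change Fin 3 at x
    fin_cases x <;> simp [hi, hj, hk]
  · rintro ⟨a, b, c, hs, h1, h2⟩
    rw [List.sublist_iff_exists_fin_orderEmbedding_get_eq] at hs
    obtain ⟨f, hf⟩ := hs
    have e0 := hf (0 : Fin 3)
    have e1 := hf (1 : Fin 3)
    have e2 := hf (2 : Fin 3)
    have l1 : f (0 : Fin 3) < f (1 : Fin 3) := f.strictMono (Fin.mk_lt_mk.2 (by norm_num))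
    have l2 : f (1 : Fin 3) < f (2 : Fin 3) := f.strictMono (Fin.mk_lt_mk.2 (by norm_num))
    refine ⟨f (0 : Fin 3), f (1 : Fin 3), f (2 : Fin 3), l1, l2, (f (2 : Fin 3)).2, ?_, ?_⟩ <;>
      simp_all

def Av (w : List ℕ) : Prop := ∀ a b c : ℕ, [a, b, c].Sublist w → c < a → a < b → False

def ASet (c : List ℕ) : Set (List ℕ) := {w | InW c w ∧ Av w}

lemma Mcount_eq (c : List ℕ) : Mcount c = (ASet c).ncard := by
  unfold Mcount ASet
  congr 1
  ext w
  simp only [Set.mem_ofPred_eq, contains_iff, Av]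
  constructor
  · rintro ⟨h, h'⟩
    exact ⟨h, fun a b c h1 h2 h3 => h' ⟨a, b, c, h1, h2, h3⟩⟩
  · rintro ⟨h, h'⟩
    exact ⟨h, fun ⟨a, b, c, h1, h2, h3⟩ => h' a b c h1 h2 h3⟩

lemma InW_perm {c w v : List ℕ} (hw : InW c w) (hv : InW c v) : w.Perm v := by
  rw [List.perm_iff_count]
  intro a
  cases a with
  | zero => rw [List.count_eq_zero_of_not_mem hw.1, List.count_eq_zero_of_not_mem hv.1]
  | succ i => rw [hw.2, hv.2]

lemma ASet_finite (c : List ℕ) : (ASet c).Finite := by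
  rcases (ASet c).eq_empty_or_nonempty with h | ⟨w, hw⟩
  · rw [h]; exact Set.finite_empty
  · refine (w.permutations.toFinset.finite_toSet).subset ?_
    intro v hv
    simp only [Finset.mem_coe, List.mem_toFinset, List.mem_permutations]
    exact InW_perm hv.1 hw.1

lemma M_single (n : ℕ) : Mcount [n] = 1 := by
  rw [Mcount_eq, Set.ncard_eq_one]
  have hr : InW [n] (List.replicate n 1) := by
    constructor
    · simp
    · intro i
      cases i <;> simp [List.count_replicate]
  refine ⟨List.replicate n 1, ?_⟩
  ext w
  simp only [Set.mem_singleton_iff]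
  constructor
  · intro h
    exact List.perm_replicate.1 (InW_perm h.1 hr)
  · rintro rfl
    refine ⟨hr, ?_⟩
    intro a b c h h1 h2
    have ha := List.eq_of_mem_replicate (h.subset (by simp : a ∈ [a,b,c]))
    have hb := List.eq_of_mem_replicate (h.subset (by simp : b ∈ [a,b,c]))
    omega

/-- Merge letters 1 and 2. -/
def mg (k : ℕ) : ℕ := if k ≤ 1 then k else k - 1

def un : ℕ → List ℕ → List ℕ
  | _, [] => []
  | k, x :: l => if x = 1 then (if k = 0 then 2 :: un 0 l else 1 :: un (k - 1) l)
      else (if x = 0 then 0 else x + 1) :: un k l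

lemma map_un (k : ℕ) (l : List ℕ) : (un k l).map mg = l := by
  induction l generalizing k with
  | nil => rfl
  | cons x l ih =>
    unfold un
    split_ifs <;> simp [ih, mg] <;> omega

lemma un_map (w : List ℕ) (h0 : 0 ∉ w) (h : ¬ [2, 1].Sublist w) :
    un (w.count 1) (w.map mg) = w := by
  induction w with
  | nil => rfl
  | cons x l ih =>
    have ih' := ih (by simp_all) (fun h' => h (h'.cons _))
    have hx0 : x ≠ 0 := by rintro rfl; simp at h0
    rcases Nat.lt_or_ge x 3 with h3 | h3
    · have : x = 1 ∨ x = 2 := by omega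
      rcases this with rfl | rfl
      · simp [un, mg, ih']
      · have h1 : 1 ∉ l := by
          intro h1
          exact h (by simpa using h1)
        rw [List.count_eq_zero_of_not_mem h1] at ih'
        simp [un, mg, List.count_cons, List.count_eq_zero_of_not_mem h1, ih']
    · have e1 : mg x = x - 1 := by unfold mg; split_ifs <;> omega
      have e2 : x ≠ 1 := by omega
      have e3 : x - 1 ≠ 1 := by omega
      have e4 : x - 1 ≠ 0 := by omega
      have e5 : x - 1 + 1 = x := by omega
      simp only [List.map_cons, un, e1, e3, e4, if_false, e5, List.count_cons_of_ne e2, ih']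

lemma un_mem_one (l : List ℕ) : 1 ∉ un 0 l := by
  induction l with
  | nil => simp [un]
  | cons x l ih =>
    unfold un
    split_ifs <;> simp [ih] <;> omega

lemma un_no21 (k : ℕ) (l : List ℕ) : ¬ [2, 1].Sublist (un k l) := by
  induction l generalizing k with
  | nil => simp [un]
  | cons x l ih =>
    unfold un
    split_ifs with h1 h2 h3
    · have := un_mem_one l
      have := ih 0
      simp_all
    · intro h
      rw [List.sublist_cons_iff] at h
      have := ih (k-1)
      simp_all
    · intro h
      rw [List.sublist_cons_iff] at h
      have := ih k
      simp_all
    · intro h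
      rw [List.sublist_cons_iff] at h
      have := ih k
      simp_all

lemma un_zero (k : ℕ) (l : List ℕ) (h : 0 ∉ l) : 0 ∉ un k l := by
  induction l generalizing k with
  | nil => simp [un]
  | cons x l ih =>
    have : 0 ∉ l := by simp_all
    unfold un
    split_ifs <;> simp_all

lemma un_count1 (k : ℕ) (l : List ℕ) (h : k ≤ l.count 1) : (un k l).count 1 = k := by
  induction l generalizing k with
  | nil => simp_all [un]
  | cons x l ih =>
    unfold un
    split_ifs with h1 h2 h3
    · subst h2
      simp [List.count_cons, ih 0 (by omega)]
    · subst h1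
      have : k - 1 ≤ l.count 1 := by simp at h; omega
      simp [ih _ this]; omega
    · subst h3
      simp at h
      simp [ih _ h]
    · rw [List.count_cons_of_ne h1] at h
      rw [List.count_cons_of_ne (by omega), ih _ h]

lemma count_map1 (w : List ℕ) : (w.map mg).count 1 = w.count 1 + w.count 2 := by
  induction w with
  | nil => rfl
  | cons x l ih =>
    simp only [List.map_cons, List.count_cons, ih, mg, beq_iff_eq]
    split_ifs <;> omega

lemma count_map2 (w : List ℕ) (i : ℕ) : (w.map mg).count (i + 2) = w.count (i + 3) := by
  induction w with
  | nil => rfl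
  | cons x l ih =>
    simp only [List.map_cons, List.count_cons, ih, mg, beq_iff_eq]
    split_ifs <;> omega

lemma zero_map (w : List ℕ) : 0 ∈ w.map mg ↔ 0 ∈ w := by
  simp only [List.mem_map, mg]
  constructor
  · rintro ⟨a, h, h'⟩
    have : a = 0 := by split_ifs at h' <;> omega
    exact this ▸ h
  · intro h
    exact ⟨0, h, by simp⟩

lemma InW_cons2 (a b : ℕ) (cs w : List ℕ) : InW (a :: b :: cs) w ↔
    0 ∉ w ∧ w.count 1 = a ∧ w.count 2 = b ∧ ∀ i, w.count (i + 3) = cs.getD i 0 := by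
  unfold InW
  constructor
  · rintro ⟨h, h'⟩
    exact ⟨h, by simpa using h' 0, by simpa using h' 1, fun i => by simpa using h' (i + 2)⟩
  · rintro ⟨h, h1, h2, h3⟩
    refine ⟨h, fun i => ?_⟩
    match i with
    | 0 => simpa using h1
    | 1 => simpa using h2
    | i + 2 => simpa using h3 i

lemma InW_cons1 (a : ℕ) (cs w : List ℕ) : InW (a :: cs) w ↔
    0 ∉ w ∧ w.count 1 = a ∧ ∀ i, w.count (i + 2) = cs.getD i 0 := by
  unfold InW
  constructor
  · rintro ⟨h, h'⟩
    exact ⟨h, by simpa using h' 0, fun i => by simpa using h' (i + 1)⟩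
  · rintro ⟨h, h1, h3⟩
    refine ⟨h, fun i => ?_⟩
    match i with
    | 0 => simpa using h1
    | i + 1 => simpa using h3 i

lemma caseA (a b : ℕ) (cs : List ℕ) :
    {w | w ∈ ASet (a :: b :: cs) ∧ ¬ [2, 1].Sublist w}.ncard = Mcount ((a + b) :: cs) := by
  rw [Mcount_eq]
  refine Set.ncard_congr (fun w _ => w.map mg) ?_ ?_ ?_
  · rintro w ⟨⟨hw, hav⟩, h21⟩
    rw [InW_cons2] at hw
    obtain ⟨h0, h1, h2, h3⟩ := hw
    refine ⟨(InW_cons1 _ _ _).2 ⟨by rwa [zero_map], by rw [count_map1, h1, h2],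
      fun i => by rw [count_map2, h3]⟩, ?_⟩
    intro x y z hs hzx hxy
    rw [List.sublist_map_iff] at hs
    obtain ⟨l', hl', he⟩ := hs
    match l', he with
    | [x', y', z'], he =>
      simp only [List.map_cons, List.map_nil, List.cons.injEq, and_true] at he
      obtain ⟨rfl, rfl, rfl⟩ := he
      refine hav x' y' z' hl' ?_ ?_
      · unfold mg at hzx; split_ifs at hzx <;> omega
      · unfold mg at hxy; split_ifs at hxy <;> omega
  · rintro w v ⟨⟨hw, -⟩, hw'⟩ ⟨⟨hv, -⟩, hv'⟩ he
    rw [InW_cons2] at hw hv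
    rw [← un_map w hw.1 hw', ← un_map v hv.1 hv', he, hw.2.1, hv.2.1]
  · rintro v ⟨hv, hav⟩
    rw [InW_cons1] at hv
    obtain ⟨h0, h1, h2⟩ := hv
    have hc1 : (un a v).count 1 = a := un_count1 a v (by omega)
    have hz := un_zero a v h0
    refine ⟨un a v, ⟨⟨(InW_cons2 _ _ _ _).2 ⟨hz, hc1, ?_, ?_⟩, ?_⟩, un_no21 a v⟩, map_un a v⟩
    · have := count_map1 (un a v)
      rw [map_un] at this
      omega
    · intro i
      rw [← count_map2, map_un, h2]
    · intro x y z hs hzx hxy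
      have hm := hs.map mg
      rw [map_un] at hm
      have hz0 : z ≠ 0 := by
        rintro rfl
        exact hz (hs.subset (by simp))
      have hne : ¬ (x = 2 ∧ z = 1) := by
        rintro ⟨rfl, rfl⟩
        exact un_no21 a v (List.Sublist.trans (by simp) hs)
      refine hav _ _ _ hm ?_ ?_
      · unfold mg; split_ifs <;> omega
      · unfold mg; split_ifs <;> omega

/-- Insert `2 1^j` before the last 1. -/
def ins (j : ℕ) : List ℕ → List ℕ
  | [] => []
  | x :: l => if 1 ∈ l then x :: ins j l else
      if x = 1 then 2 :: (List.replicate j 1 ++ 1 :: l) else x :: l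

lemma ins_count (j : ℕ) (w : List ℕ) (h : 1 ∈ w) (i : ℕ) : (ins j w).count i =
    w.count i + (if i = 1 then j else 0) + (if i = 2 then 1 else 0) := by
  induction w with
  | nil => simp at h
  | cons x l ih =>
    unfold ins
    split_ifs with h1 h2 h3 h4 h5 <;> simp_all [List.count_cons, List.count_replicate] <;> (try split_ifs) <;> omega

lemma sub_ins (j : ℕ) (w : List ℕ) : w.Sublist (ins j w) := by
  induction w with
  | nil => simp [ins]
  | cons x l ih =>
    unfold ins
    split_ifs with h1 h2
    · exact ih.cons_cons _
    · subst h2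
      exact (List.sublist_append_right _ _).cons _
    · exact List.Sublist.refl _

lemma ins_21 (j : ℕ) (w : List ℕ) (h : 1 ∈ w) : [2, 1].Sublist (ins j w) := by
  induction w with
  | nil => simp at h
  | cons x l ih =>
    unfold ins
    split_ifs with h1 h2
    · exact (ih h1).cons _
    · simp
    · simp_all

lemma ins_mem (j : ℕ) (w : List ℕ) (c : ℕ) (h : c ∈ ins j w) : c ∈ w ∨ (c = 2 ∧ 1 ∈ w) := by
  induction w with
  | nil => simp [ins] at h
  | cons x l ih =>
    unfold ins at h
    split_ifs at h with h1 h2 <;> simp_all <;> grind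

lemma pair_tail (j : ℕ) (l : List ℕ) (b c : ℕ) (hb : b ≠ 1)
    (h : [b, c].Sublist (List.replicate j 1 ++ 1 :: l)) : [b, c].Sublist l := by
  induction j with
  | zero =>
    simp only [List.replicate_zero, List.nil_append, List.sublist_cons_iff] at h
    simp_all
  | succ j ih =>
    rw [List.replicate_succ, List.cons_append, List.sublist_cons_iff] at h
    simp_all

lemma triple_tail (j : ℕ) (l : List ℕ) (a b c : ℕ) (hb : a ≠ 1)
    (h : [a, b, c].Sublist (List.replicate j 1 ++ 1 :: l)) : [a, b, c].Sublist l := by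
  induction j with
  | zero =>
    simp only [List.replicate_zero, List.nil_append, List.sublist_cons_iff] at h
    simp_all
  | succ j ih =>
    rw [List.replicate_succ, List.cons_append, List.sublist_cons_iff] at h
    simp_all

lemma ins_pair (j : ℕ) (w : List ℕ) (b c : ℕ) (hb : 3 ≤ b)
    (h : [b, c].Sublist (ins j w)) : [b, c].Sublist w ∨ (c = 2 ∧ [b, 1].Sublist w) := by
  induction w with
  | nil => simp [ins] at h
  | cons x l ih =>
    unfold ins at h
    split_ifs at h with h1 h2
    · rw [List.sublist_cons_iff] at h
      rcases h with h | ⟨r, hr, h⟩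
      · rcases ih h with h | ⟨h, h'⟩
        · exact Or.inl (h.cons _)
        · exact Or.inr ⟨h, h'.cons _⟩
      · simp only [List.cons.injEq] at hr
        obtain ⟨rfl, rfl⟩ := hr
        rw [List.singleton_sublist] at h
        rcases ins_mem j l c h with h | ⟨h, h'⟩
        · left; simpa using h
        · right; simpa [h] using h'
    · rw [List.sublist_cons_iff] at h
      rcases h with h | ⟨r, hr, h⟩
      · exact Or.inl ((pair_tail j l b c (by omega) h).cons _)
      · simp only [List.cons.injEq] at hr
        omega
    · exact Or.inl h

lemma ins_triple (j : ℕ) (w : List ℕ) (a b c : ℕ) (hc : 1 ≤ c) (hca : c < a) (hab : a < b)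
    (h : [a, b, c].Sublist (ins j w)) :
    [a, b, c].Sublist w ∨ (c = 2 ∧ [a, b, 1].Sublist w) := by
  induction w with
  | nil => simp [ins] at h
  | cons x l ih =>
    unfold ins at h
    split_ifs at h with h1 h2
    · rw [List.sublist_cons_iff] at h
      rcases h with h | ⟨r, hr, h⟩
      · rcases ih h with h | ⟨h, h'⟩
        · exact Or.inl (h.cons _)
        · exact Or.inr ⟨h, h'.cons _⟩
      · simp only [List.cons.injEq] at hr
        obtain ⟨rfl, rfl⟩ := hr
        rcases ins_pair j l b c (by omega) h with h | ⟨h, h'⟩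
        · left; exact h.cons_cons _
        · right; exact ⟨h, h'.cons_cons _⟩
    · rw [List.sublist_cons_iff] at h
      rcases h with h | ⟨r, hr, h⟩
      · exact Or.inl ((triple_tail j l a b c (by omega) h).cons _)
      · simp only [List.cons.injEq] at hr
        obtain ⟨rfl, rfl⟩ := hr
        have h' := pair_tail j l b c (by omega) h
        have : c ∈ l := h'.subset (by simp)
        have : c = 1 := by omega
        simp_all
    · exact Or.inl h

lemma tail_inj (j j' : ℕ) (l l' : List ℕ) (h1 : 1 ∉ l) (h1' : 1 ∉ l')
    (h : List.replicate j 1 ++ 1 :: l = List.replicate j' 1 ++ 1 :: l') : l = l' := by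
  have := congrArg (List.filter (fun x => decide (x ≠ 1))) h
  have e : ∀ l : List ℕ, 1 ∉ l → l.filter (fun x => decide (x ≠ 1)) = l := by
    intro l hl
    rw [List.filter_eq_self]
    intro a ha
    simp only [ne_eq, decide_eq_true_eq]
    rintro rfl
    exact hl ha
  rw [List.filter_append, List.filter_append, List.filter_cons, List.filter_cons, e l h1, e l' h1'] at this
  simpa [List.filter_replicate] using this

lemma tail_no21 (j : ℕ) (l : List ℕ) (h1 : 1 ∉ l) :
    ¬ [2, 1].Sublist (List.replicate j 1 ++ 1 :: l) := by
  intro h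
  exact h1 ((pair_tail j l 2 1 (by omega) h).subset (by simp))

lemma ins_inj (j j' : ℕ) (v v' : List ℕ) (h1 : 1 ∈ v) (h1' : 1 ∈ v')
    (h : ins j v = ins j' v') : v = v' := by
  induction v generalizing v' with
  | nil => simp at h1
  | cons x l ih =>
    cases v' with
    | nil => simp at h1'
    | cons x' l' =>
      unfold ins at h
      by_cases a : 1 ∈ l <;> by_cases a' : 1 ∈ l'
      · rw [if_pos a, if_pos a'] at h
        simp only [List.cons.injEq] at h
        rw [h.1, ih l' a a' h.2]
      · have : x' = 1 := by simp_all
        rw [if_pos a, if_neg a', if_pos this] at h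
        simp only [List.cons.injEq] at h
        exact absurd (h.2 ▸ ins_21 j l a) (tail_no21 _ _ a')
      · have : x = 1 := by simp_all
        rw [if_pos a', if_neg a, if_pos this] at h
        simp only [List.cons.injEq] at h
        exact absurd (h.2.symm ▸ ins_21 j' l' a') (tail_no21 _ _ a)
      · have e : x = 1 := by simp_all
        have e' : x' = 1 := by simp_all
        rw [if_neg a', if_neg a, if_pos e, if_pos e'] at h
        simp only [List.cons.injEq] at h
        rw [e, e', tail_inj _ _ _ _ a a' h.2]

lemma split_ones (l : List ℕ) (h : ∀ b, b ≠ 1 → ¬ [b, 1].Sublist l) (h1 : 1 ∈ l) :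
    ∃ j r, 1 ∉ r ∧ l = List.replicate j 1 ++ 1 :: r := by
  induction l with
  | nil => simp at h1
  | cons x l ih =>
    by_cases a : 1 ∈ l
    · have hx : x = 1 := by
        by_contra hx
        exact h x hx (by simpa using a)
      obtain ⟨j, r, hr, e⟩ := ih (fun b hb hs => h b hb (hs.cons _)) a
      exact ⟨j + 1, r, hr, by rw [hx, e, List.replicate_succ, List.cons_append]⟩
    · have hx : x = 1 := by simp_all
      exact ⟨0, l, a, by simp [hx]⟩

lemma ins_surj (w : List ℕ) (h0 : 0 ∉ w) (hav : Av w) (h21 : [2, 1].Sublist w) :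
    ∃ j v, 1 ∈ v ∧ ins j v = w := by
  induction w with
  | nil => simp at h21
  | cons x l ih =>
    by_cases hl : [2, 1].Sublist l
    · obtain ⟨j, v, hv, e⟩ := ih (by simp_all) (fun a b c hs => hav a b c (hs.cons _)) hl
      exact ⟨j, x :: v, by simp [hv], by simp [ins, hv, e]⟩
    · rw [List.sublist_cons_iff] at h21
      rcases h21 with h | ⟨r, hr, h⟩
      · exact absurd h hl
      · simp only [List.cons.injEq] at hr
        obtain ⟨rfl, rfl⟩ := hr
        rw [List.singleton_sublist] at h
        obtain ⟨j, r, hr, e⟩ := split_ones l (by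
          intro b hb hs
          rcases Nat.lt_or_ge b 3 with hb3 | hb3
          · have : b = 0 ∨ b = 2 := by omega
            rcases this with rfl | rfl
            · have : 0 ∈ l := hs.subset (by simp)
              simp_all
            · exact hl hs
          · exact hav 2 b 1 (hs.cons_cons _) (by omega) (by omega)) h
        exact ⟨j, 1 :: r, by simp, by simp [ins, hr, e]⟩

lemma caseB (a b : ℕ) (cs : List ℕ) :
    {w | w ∈ ASet (a :: (b + 1) :: cs) ∧ [2, 1].Sublist w}.ncard =
      ∑ r ∈ Finset.Icc 1 a, Mcount (r :: b :: cs) := by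
  have hU : (⋃ r ∈ Finset.Icc 1 a, ASet (r :: b :: cs)).ncard =
      ∑ r ∈ Finset.Icc 1 a, Mcount (r :: b :: cs) := by
    classical
    have hd : (↑(Finset.Icc 1 a) : Set ℕ).PairwiseDisjoint
        (fun r => (ASet_finite (r :: b :: cs)).toFinset) := by
      intro r _ s _ hrs
      rw [Function.onFun, Finset.disjoint_left]
      intro w hw hw'
      rw [Set.Finite.mem_toFinset] at hw hw'
      have h1 := ((InW_cons2 _ _ _ _).1 hw.1).2.1
      have h2 := ((InW_cons2 _ _ _ _).1 hw'.1).2.1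
      exact hrs (h1.symm.trans h2)
    have e : (⋃ r ∈ Finset.Icc 1 a, ASet (r :: b :: cs)) =
        ↑((Finset.Icc 1 a).biUnion (fun r => (ASet_finite (r :: b :: cs)).toFinset)) := by
      ext w; simp
    rw [e, Set.ncard_coe_finset, Finset.card_biUnion hd]
    refine Finset.sum_congr rfl fun r _ => ?_
    rw [Mcount_eq, Set.ncard_eq_toFinset_card _ (ASet_finite _)]
  rw [← hU]
  symm
  have key : ∀ v ∈ (⋃ r ∈ Finset.Icc 1 a, ASet (r :: b :: cs)),
      1 ≤ v.count 1 ∧ v.count 1 ≤ a ∧ v ∈ ASet (v.count 1 :: b :: cs) := by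
    intro v hv
    simp only [Set.mem_iUnion, Finset.mem_Icc, exists_prop] at hv
    obtain ⟨r, hr, hv⟩ := hv
    have h1 := ((InW_cons2 _ _ _ _).1 hv.1).2.1
    rw [h1]
    exact ⟨hr.1, hr.2, hv⟩
  refine Set.ncard_congr (fun v _ => ins (a - v.count 1) v) ?_ ?_ ?_
  · intro v hv
    obtain ⟨h1, h2, hW, hav⟩ := key v hv
    rw [InW_cons2] at hW
    obtain ⟨w0, -, w2, w3⟩ := hW
    have hm : 1 ∈ v := List.count_pos_iff.1 h1
    have hz : 0 ∉ ins (a - v.count 1) v := by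
      intro h
      rcases ins_mem _ _ _ h with h | h
      · exact w0 h
      · omega
    refine ⟨⟨(InW_cons2 _ _ _ _).2 ⟨hz, ?_, ?_, ?_⟩, ?_⟩, ins_21 _ _ hm⟩
    · rw [ins_count _ _ hm]; simp; omega
    · rw [ins_count _ _ hm, w2]; simp
    · intro i
      rw [ins_count _ _ hm, w3]; simp
    · intro x y z hs hzx hxy
      have hz1 : 1 ≤ z := by
        rcases Nat.eq_zero_or_pos z with rfl | h
        · exact absurd (hs.subset (by simp)) hz
        · exact h
      rcases ins_triple _ _ _ _ _ hz1 hzx hxy hs with h | ⟨h, h'⟩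
      · exact hav _ _ _ h hzx hxy
      · exact hav _ _ _ h' (by omega) hxy
  · intro v v' hv hv' he
    exact ins_inj _ _ _ _ (List.count_pos_iff.1 (key v hv).1)
      (List.count_pos_iff.1 (key v' hv').1) he
  · rintro w ⟨⟨hW, hav⟩, h21⟩
    rw [InW_cons2] at hW
    obtain ⟨w0, w1, w2, w3⟩ := hW
    obtain ⟨j, v, hv, rfl⟩ := ins_surj w w0 hav h21
    have hpos : 1 ≤ v.count 1 := List.count_pos_iff.2 hv
    rw [ins_count _ _ hv] at w1 w2
    simp at w1 w2
    have hj : a - v.count 1 = j := by omega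
    refine ⟨v, ?_, by simp only [hj]⟩
    simp only [Set.mem_iUnion, Finset.mem_Icc, exists_prop]
    refine ⟨v.count 1, ⟨hpos, by omega⟩, (InW_cons2 _ _ _ _).2 ⟨?_, rfl, w2, ?_⟩, ?_⟩
    · exact fun h => w0 ((sub_ins j v).subset h)
    · intro i
      have := w3 i
      rw [ins_count _ _ hv] at this
      simpa using this
    · exact fun x y z hs => hav x y z (hs.trans (sub_ins j v))

/-- `M(c₁) = 1`, and for `n ≥ 2`: if `c₂ ≥ 1` then
`M(c₁, …, c_n) = M(c₁ + c₂, c₃, …, c_n) + ∑_{r=1}^{c₁} M(r, c₂ - 1, c₃, …, c_n)`,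
and if `c₂ = 0` then `M(c₁, …, c_n) = M(c₁, c₃, …, c_n)`. -/
theorem Mcount_recurrence :
    (∀ c₁ : ℕ, Mcount [c₁] = 1) ∧
    (∀ (c₁ c₂ : ℕ) (cs : List ℕ),
      (1 ≤ c₂ → Mcount (c₁ :: c₂ :: cs) =
        Mcount ((c₁ + c₂) :: cs) +
          ∑ r ∈ Finset.Icc 1 c₁, Mcount (r :: (c₂ - 1) :: cs)) ∧
      (c₂ = 0 → Mcount (c₁ :: c₂ :: cs) = Mcount (c₁ :: cs))) := by
  refine ⟨M_single, fun a b cs => ⟨fun hb => ?_, fun hb => ?_⟩⟩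
  · obtain ⟨b, rfl⟩ : ∃ k, b = k + 1 := ⟨b - 1, by omega⟩
    rw [Nat.add_sub_cancel, ← caseA, ← caseB, Mcount_eq]
    rw [← Set.ncard_union_eq ?_ ((ASet_finite _).subset fun w h => h.1)
      ((ASet_finite _).subset fun w h => h.1)]
    · congr 1
      ext w
      simp only [Set.mem_union, Set.mem_ofPred_eq]
      tauto
    · rw [Set.disjoint_left]
      rintro w ⟨-, h⟩ ⟨-, h'⟩
      exact h h'
  · subst hb
    have := caseA a 0 cs
    rw [Nat.add_zero] at this
    rw [← this, Mcount_eq]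
    congr 1
    ext w
    simp only [Set.mem_ofPred_eq]
    refine ⟨fun h => ⟨h, fun hs => ?_⟩, fun h => h.1⟩
    have h2 := ((InW_cons2 _ _ _ _).1 h.1).2.2.1
    rw [List.count_eq_zero] at h2
    exact h2 (hs.subset (by simp))
end

section
/- For positive integers c₁,…,c_n, let N(c₁,…,c_n) denote the number of words in W_{(c₁,…,c_n)} that avoid both of the patterns 231 and 221. Then N(c₁) = 1 for every positive integer c₁, and for n ≥ 2 and any positive integers c₁,…,c_n: N(c₁,…,c_n) = 2·N(c₁,…,c_{n−1}) + Σ_{i=1}^{n−2} N(c₁,…,c_i)·N(c_{i+1},…,c_{n−1}) + Σ_{i=1}^{n−1} Σ_{k=1}^{c_i−1} N(c₁,…,c_{i−1}, k)·N(c_i−k, c_{i+1},…,c_{n−1}). -/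
/-- `N(c₁, …, c_n)`: the number of words in `W_{(c₁, …, c_n)}` avoiding both of the
patterns `231` and `221`. -/
noncomputable def Ncount (c : List ℕ) : ℕ :=
  {w : List ℕ | InW c w ∧ ¬Contains231 w ∧ ¬Contains221 w}.ncard

def AvP (w : List ℕ) : Prop := ∀ a b c : ℕ, [a, b, c].Sublist w → ¬ (c < a ∧ a ≤ b)

theorem avP_iff (w : List ℕ) : (¬Contains231 w ∧ ¬Contains221 w) ↔ AvP w := by
  constructor
  · rintro ⟨h1, h2⟩ a b c hs ⟨hca, hab⟩
    rw [List.sublist_iff_exists_fin_orderEmbedding_get_eq] at hs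
    obtain ⟨f, hf⟩ := hs
    have e0 := hf ⟨0, by simp⟩
    have e1 := hf ⟨1, by simp⟩
    have e2 := hf ⟨2, by simp⟩
    have l1 : f ⟨0, by simp⟩ < f ⟨1, by simp⟩ := f.lt_iff_lt.2 (by simp [Fin.lt_def])
    have l2 : f ⟨1, by simp⟩ < f ⟨2, by simp⟩ := f.lt_iff_lt.2 (by simp [Fin.lt_def])
    generalize f ⟨0, by simp⟩ = i at *
    generalize f ⟨1, by simp⟩ = j at *
    generalize f ⟨2, by simp⟩ = k at *
    simp at e0 e1 e2
    rcases hab.lt_or_eq with h | h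
    · refine h1 ⟨i, j, k, l1, l2, k.2, ?_, ?_⟩ <;> simp [← e0, ← e1, ← e2] <;> omega
    · refine h2 ⟨i, j, k, l1, l2, k.2, ?_, ?_⟩ <;> simp [← e0, ← e1, ← e2] <;> omega
  · intro h
    have key : ∀ a b c : ℕ, a < b → b < c → c < w.length → w.getD c 0 < w.getD a 0 →
        w.getD a 0 ≤ w.getD b 0 → False := by
      intro a b c hab hbc hc h1 h2
      refine h _ _ _ ?_ ⟨h1, h2⟩
      have ha : a < w.length := by omega
      have hb : b < w.length := by omega
      have := List.map_getElem_sublist (l := w) (is := [⟨a, ha⟩, ⟨b, hb⟩, ⟨c, hc⟩])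
        (by simp; omega)
      simpa [List.getD_eq_getElem, ha, hb, hc] using this
    constructor
    · rintro ⟨a, b, c, h1, h2, h3, h4, h5⟩
      exact key a b c h1 h2 h3 h4 h5.le
    · rintro ⟨a, b, c, h1, h2, h3, h4, h5⟩
      exact key a b c h1 h2 h3 h4 h5.le

theorem AvP.sub {u v : List ℕ} (h : AvP v) (hs : u.Sublist v) : AvP u :=
  fun a b c h' => h a b c (h'.trans hs)

theorem avP_append {u v : List ℕ} (hu : AvP u) (hv : AvP v)
    (h : ∀ a ∈ u, ∀ c ∈ v, a ≤ c) : AvP (u ++ v) := by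
  rintro a b c hs ⟨h1, h2⟩
  rw [List.sublist_append_iff] at hs
  obtain ⟨l1, l2, e, s1, s2⟩ := hs
  rcases l1 with _ | ⟨x, l1⟩
  · simp at e; subst e; exact hv a b c s2 ⟨h1, h2⟩
  · simp at e
    obtain ⟨rfl, e⟩ := e
    rcases List.eq_nil_or_concat l2 with rfl | ⟨l2', y, rfl⟩
    · simp at e; subst e; exact hu _ _ _ s1 ⟨h1, h2⟩
    · have : c = y := by
        have := congrArg List.getLast? e
        simpa using this
      subst this
      have h3 := h a (s1.subset (by simp)) c (s2.subset (by simp))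
      omega

theorem avP_replicate (m n : ℕ) : AvP (List.replicate m n) := by
  rintro a b c hs ⟨h1, h2⟩
  have ha := List.eq_of_mem_replicate (hs.subset (show a ∈ [a, b, c] by simp))
  have hc := List.eq_of_mem_replicate (hs.subset (show c ∈ [a, b, c] by simp))
  omega

theorem avP_cons {n : ℕ} {v : List ℕ} (hv : AvP v) (h : ∀ x ∈ v, x < n) : AvP (n :: v) := by
  rintro a b c hs ⟨h1, h2⟩
  rw [List.sublist_cons_iff] at hs
  rcases hs with hs | ⟨r, e, hs⟩
  · exact hv a b c hs ⟨h1, h2⟩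
  · simp at e
    obtain ⟨rfl, rfl⟩ := e
    have := h b (hs.subset (by simp))
    omega

theorem avP_map (s : ℕ) (w : List ℕ) : AvP (w.map (· + s)) ↔ AvP w := by
  constructor
  · intro h a b c hs h'
    exact h (a + s) (b + s) (c + s) (by simpa using hs.map (· + s)) (by omega)
  · intro h a b c hs h'
    rw [List.sublist_map_iff] at hs
    obtain ⟨l, hl, e⟩ := hs
    match l, e with
    | [x, y, z], e =>
      simp at e
      exact h x y z hl (by omega)

open Classical in
noncomputable def SA (l : List ℕ) : Finset (List ℕ) := l.permutations.toFinset.filter AvP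

theorem mem_SA {l w : List ℕ} : w ∈ SA l ↔ w.Perm l ∧ AvP w := by
  simp [SA]

theorem SA_map (s : ℕ) (l : List ℕ) : (SA (l.map (· + s))).card = (SA l).card := by
  symm
  refine Finset.card_nbij (fun w => w.map (· + s)) ?_ ?_ ?_
  · intro w hw
    simp only [Finset.mem_coe, mem_SA] at hw ⊢
    exact ⟨hw.1.map _, (avP_map _ _).2 hw.2⟩
  · intro a _ b _ h
    exact List.map_injective_iff.2 (add_left_injective s) h
  · intro w hw
    simp only [Finset.mem_coe, mem_SA] at hw
    have e : (w.map (· - s)).map (· + s) = w := by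
      rw [List.map_map]
      conv_rhs => rw [← List.map_id w]
      apply List.map_congr_left
      intro x hx
      have := hw.1.subset hx
      simp at this
      obtain ⟨y, _, rfl⟩ := this
      simp
    refine ⟨w.map (· - s), ?_, e⟩
    simp only [Finset.mem_coe, mem_SA]
    refine ⟨?_, ?_⟩
    · have := hw.1.map (· - s)
      simpa [List.map_map, Function.comp_def] using this
    · rw [← avP_map s, e]; exact hw.2

theorem tail_form (n : ℕ) (t : List ℕ) (h : AvP (n :: t)) (ht : ∀ x ∈ t, x ≤ n) :
    ∃ v m, t = v ++ List.replicate m n ∧ ∀ x ∈ v, x < n := by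
  induction t with
  | nil => exact ⟨[], 0, by simp⟩
  | cons x t ih =>
    by_cases hx : x = n
    · subst hx
      refine ⟨[], t.length + 1, ?_, by simp⟩
      simp only [List.nil_append]
      rw [List.eq_replicate_iff]
      refine ⟨by simp, ?_⟩
      intro b hb
      rcases List.mem_cons.1 hb with rfl | hb
      · rfl
      · have := h x x b (by simpa using hb)
        have := ht b (by simp [hb])
        omega
    · obtain ⟨v, m, rfl, hv⟩ := ih (h.sub (by simp)) (fun y hy => ht y (by simp [hy]))
      refine ⟨x :: v, m, by simp, ?_⟩
      have := ht x (by simp)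
      intro y hy
      rcases List.mem_cons.1 hy with rfl | hy
      · omega
      · exact hv y hy

theorem split_perm {L u v : List ℕ} (hL : L.Pairwise (· ≤ ·)) (h : (u ++ v).Perm L)
    (huv : ∀ a ∈ u, ∀ c ∈ v, a ≤ c) :
    u.Perm (L.take u.length) ∧ v.Perm (L.drop u.length) := by
  have pu := List.perm_insertionSort (· ≤ ·) u
  have pv := List.perm_insertionSort (· ≤ ·) v
  have e : L = u.insertionSort (· ≤ ·) ++ v.insertionSort (· ≤ ·) := by
    refine List.Perm.eq_of_pairwise (le := (· ≤ ·)) (fun a b _ _ h1 h2 => le_antisymm h1 h2) hL ?_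
      (h.symm.trans (pu.append pv).symm)
    rw [List.pairwise_append]
    refine ⟨List.pairwise_insertionSort _ _, List.pairwise_insertionSort _ _, ?_⟩
    intro a ha b hb
    exact huv a (pu.subset ha) b (pv.subset hb)
  have hl : u.length = (u.insertionSort (· ≤ ·)).length := by simp
  rw [e, hl, List.take_left, List.drop_left]
  exact ⟨pu.symm, pv.symm⟩

theorem first_split {n : ℕ} {u u' t t' : List ℕ} (hu : n ∉ u) (hu' : n ∉ u')
    (h : u ++ n :: t = u' ++ n :: t') : u = u' ∧ t = t' := by
  induction u generalizing u' with
  | nil =>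
    cases u' with
    | nil => simpa using h
    | cons x u' => simp at h; simp [h.1] at hu'
  | cons y u ih =>
    cases u' with
    | nil => simp at h; simp [h.1] at hu
    | cons x u' =>
      simp at h hu hu' ⊢
      obtain ⟨h1, h2⟩ := ih hu.2 hu'.2 h.2
      exact ⟨⟨h.1, h1⟩, h2⟩

theorem main_step (L : List ℕ) (n m : ℕ) (hL : L.Pairwise (· ≤ ·)) (hn : ∀ x ∈ L, x < n) :
    (SA (L ++ List.replicate (m + 1) n)).card =
      ∑ j ∈ Finset.range (L.length + 1), (SA (L.take j)).card * (SA (L.drop j)).card := by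
  simp_rw [← Finset.card_product]
  rw [← Finset.card_sigma]
  symm
  refine Finset.card_nbij (fun p => p.2.1 ++ n :: (p.2.2 ++ List.replicate m n)) ?_ ?_ ?_
  · rintro ⟨j, u, v⟩ h
    simp only [Finset.mem_coe, Finset.mem_sigma, Finset.mem_product, mem_SA] at h ⊢
    obtain ⟨hj, ⟨pu, au⟩, pv, av⟩ := h
    have hun : ∀ x ∈ u, x < n := fun x hx => hn x (List.mem_of_mem_take (pu.subset hx))
    have hvn : ∀ x ∈ v, x < n := fun x hx => hn x (List.mem_of_mem_drop (pv.subset hx))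
    have huv : ∀ a ∈ u, ∀ c ∈ v, a ≤ c := by
      intro a ha c hc
      rw [← List.take_append_drop j L, List.pairwise_append] at hL
      exact hL.2.2 a (pu.subset ha) c (pv.subset hc)
    constructor
    · have : (u ++ v).Perm L := by
        have := pu.append pv
        rwa [List.take_append_drop] at this
      rw [List.replicate_succ]
      refine List.perm_middle.trans (List.Perm.trans ?_ List.perm_middle.symm)
      rw [← List.append_assoc]
      exact (this.append_right _).cons n
    · refine avP_append au ?_ ?_
      · rw [← List.cons_append]
        refine avP_append (avP_cons av hvn) (avP_replicate _ _) ?_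
        intro a ha c hc
        rw [List.eq_of_mem_replicate hc]
        rcases List.mem_cons.1 ha with rfl | ha
        · exact le_rfl
        · exact (hvn a ha).le
      · intro a ha c hc
        rcases List.mem_cons.1 hc with rfl | hc
        · exact (hun a ha).le
        · rcases List.mem_append.1 hc with hc | hc
          · exact huv a ha c hc
          · rw [List.eq_of_mem_replicate hc]; exact (hun a ha).le
  · rintro ⟨j, u, v⟩ h ⟨j', u', v'⟩ h' e
    simp only [Finset.mem_coe, Finset.mem_sigma, Finset.mem_product, mem_SA, Finset.mem_range]
      at h h' e
    obtain ⟨hj, ⟨pu, au⟩, pv, av⟩ := h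
    obtain ⟨hj', ⟨pu', au'⟩, pv', av'⟩ := h'
    have hun : n ∉ u := fun hx => (hn n (List.mem_of_mem_take (pu.subset hx))).false
    have hun' : n ∉ u' := fun hx => (hn n (List.mem_of_mem_take (pu'.subset hx))).false
    obtain ⟨rfl, e2⟩ := first_split hun hun' e
    have e3 := List.append_cancel_right e2
    subst e3
    have l1 := pu.length_eq
    have l2 := pu'.length_eq
    simp at l1 l2
    have : j = j' := by omega
    subst this
    rfl
  · intro w hw
    simp only [Finset.mem_coe, mem_SA] at hw
    obtain ⟨pw, aw⟩ := hw
    have hmem : n ∈ w := pw.symm.subset (by simp)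
    have hwle : ∀ x ∈ w, x ≤ n := by
      intro x hx
      rcases List.mem_append.1 (pw.subset hx) with h | h
      · exact (hn x h).le
      · exact (List.eq_of_mem_replicate h).le
    obtain ⟨u, t, rfl, hun⟩ := List.eq_append_cons_of_mem hmem
    obtain ⟨v, m', rfl, hv⟩ := tail_form n t (aw.sub (by simp)) (fun x hx => hwle x (by simp [hx]))
    have hnL : n ∉ L := fun h => (hn n h).false
    have hnv : n ∉ v := fun h => (hv n h).false
    have hm : m' = m := by
      have := pw.count_eq n
      simp [List.count_eq_zero_of_not_mem hun, List.count_eq_zero_of_not_mem hnL,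
        List.count_eq_zero_of_not_mem hnv] at this
      exact this
    subst hm
    have huv : ∀ a ∈ u, ∀ c ∈ v, a ≤ c := by
      intro a ha c hc
      have := aw a n c (by
        have h1 : [a].Sublist u := by simpa using ha
        have h2 : [n, c].Sublist (n :: (v ++ List.replicate m' n)) := by
          simp [hc]
        simpa using h1.append h2)
      have := hwle a (by simp [ha])
      omega
    have pL : (u ++ v).Perm L := by
      rw [List.replicate_succ] at pw
      have := (List.perm_middle.symm.trans pw).trans List.perm_middle
      have := this.cons_inv
      rw [← List.append_assoc] at this
      exact (List.perm_append_right_iff _).1 this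
    obtain ⟨p1, p2⟩ := split_perm hL pL huv
    have hl := pL.length_eq
    simp at hl
    refine ⟨⟨u.length, u, v⟩, ?_, rfl⟩
    simp only [Finset.mem_coe, Finset.mem_sigma, Finset.mem_product, mem_SA, Finset.mem_range]
    exact ⟨by omega, ⟨p1, aw.sub (by simp)⟩, p2, aw.sub (by
      refine List.Sublist.trans ?_ (List.sublist_append_right _ _)
      refine List.Sublist.trans ?_ (List.sublist_cons_self _ _)
      simp)⟩

def IW : ℕ → List ℕ → List ℕ
  | _, [] => []
  | s, x :: c => List.replicate x (s + 1) ++ IW (s + 1) c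

theorem IW_append (s : ℕ) (a b : List ℕ) : IW s (a ++ b) = IW s a ++ IW (s + a.length) b := by
  induction a generalizing s with
  | nil => simp [IW]
  | cons x a ih =>
    simp [IW, ih]; congr 1; omega

theorem IW_shift (s r : ℕ) (c : List ℕ) : IW (r + s) c = (IW r c).map (· + s) := by
  induction c generalizing r with
  | nil => simp [IW]
  | cons x c ih =>
    have := ih (r + 1)
    simp only [IW, List.map_append, List.map_replicate, ← this]
    congr 2 <;> omega

theorem mem_IW {s : ℕ} {c : List ℕ} {x : ℕ} (h : x ∈ IW s c) : s < x ∧ x ≤ s + c.length := by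
  induction c generalizing s with
  | nil => simp [IW] at h
  | cons y c ih =>
    rcases List.mem_append.1 h with h | h
    · have := List.eq_of_mem_replicate h
      simp; omega
    · have := ih h
      simp; omega

theorem length_IW (s : ℕ) (c : List ℕ) : (IW s c).length = c.sum := by
  induction c generalizing s with
  | nil => simp [IW]
  | cons y c ih => simp [IW, ih]

theorem sorted_IW (s : ℕ) (c : List ℕ) : (IW s c).Pairwise (· ≤ ·) := by
  induction c generalizing s with
  | nil => simp [IW]
  | cons y c ih =>
    rw [IW, List.pairwise_append]
    refine ⟨by simp [List.pairwise_replicate], ih _, ?_⟩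
    intro a ha b hb
    have := List.eq_of_mem_replicate ha
    have := mem_IW hb
    omega

theorem count_IW (s : ℕ) (c : List ℕ) (i : ℕ) : (IW s c).count (s + i + 1) = c.getD i 0 := by
  induction c generalizing s i with
  | nil => simp [IW]
  | cons y c ih =>
    rw [IW, List.count_append, List.count_replicate]
    cases i with
    | zero =>
      have : s + 0 + 1 ∉ IW (s + 1) c := fun h => by have := mem_IW h; omega
      simp [List.count_eq_zero_of_not_mem this]
    | succ i =>
      have := ih (s + 1) i
      rw [show s + (i + 1) + 1 = s + 1 + i + 1 by omega, this]
      simp; omega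

theorem InW_iff (c w : List ℕ) : InW c w ↔ w.Perm (IW 0 c) := by
  have hc := count_IW 0 c
  have h0 : 0 ∉ IW 0 c := fun h => by have := mem_IW h; omega
  simp only [Nat.zero_add] at hc
  rw [List.perm_iff_count]
  constructor
  · rintro ⟨h1, h2⟩ a
    cases a with
    | zero => rw [List.count_eq_zero_of_not_mem h1, List.count_eq_zero_of_not_mem h0]
    | succ a => rw [h2, hc]
  · intro h
    refine ⟨?_, fun i => by rw [h, hc]⟩
    have := h 0
    rw [List.count_eq_zero_of_not_mem h0] at this
    exact List.count_eq_zero.1 this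

theorem Ncount_eq (c : List ℕ) (s : ℕ) : Ncount c = (SA (IW s c)).card := by
  have h : IW s c = (IW 0 c).map (· + s) := by rw [← IW_shift]; simp
  rw [h, SA_map, Ncount, ← Set.ncard_coe_finset]
  congr 1
  ext w
  simp [mem_SA, InW_iff, avP_iff]

theorem sum_Icc_shift (g : ℕ → ℕ) (r : ℕ) :
    ∑ i ∈ Finset.Icc 1 r, g i = ∑ i ∈ Finset.range r, g (i + 1) := by
  rw [Finset.range_eq_Ico, Finset.sum_Ico_add' g 0 r 1]
  rfl

theorem sum_blocks (f : ℕ → ℕ) (c : List ℕ) :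
    ∑ j ∈ Finset.range (c.sum + 1), f j = f 0 + ∑ i ∈ Finset.range c.length,
      ∑ k ∈ Finset.Icc 1 (c.getD i 0), f ((c.take i).sum + k) := by
  induction c using List.reverseRecOn with
  | nil => simp
  | append_singleton c x ih =>
    have e1 : (c ++ [x]).sum + 1 = (c.sum + 1) + x := by simp; omega
    rw [e1, Finset.sum_range_add, ih, List.length_append, List.length_singleton,
      Finset.sum_range_succ, ← add_assoc]
    congr 1
    · congr 1
      apply Finset.sum_congr rfl
      intro i hi
      have hi := Finset.mem_range.1 hi
      rw [List.getD_append _ _ _ _ hi, List.take_append_of_le_length hi.le]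
    · simp
      rw [sum_Icc_shift]
      refine Finset.sum_congr rfl fun i _ => ?_
      congr 1; omega

theorem block_term (a b : List ℕ) (x k : ℕ) (hk : k ≤ x) :
    (SA ((IW 0 (a ++ x :: b)).take (a.sum + k))).card *
      (SA ((IW 0 (a ++ x :: b)).drop (a.sum + k))).card =
    Ncount (a ++ [k]) * Ncount ((x - k) :: b) := by
  have e : IW 0 (a ++ x :: b) = IW 0 (a ++ [k]) ++ IW a.length ((x - k) :: b) := by
    rw [IW_append, IW_append]
    simp only [IW, List.append_nil, Nat.zero_add]
    rw [List.append_assoc, ← List.append_assoc (List.replicate k _), List.replicate_append_replicate]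
    congr 3; omega
  have hl : a.sum + k = (IW 0 (a ++ [k])).length := by rw [length_IW]; simp
  rw [e, hl, List.take_left, List.drop_left, Ncount_eq (a ++ [k]) 0, Ncount_eq (_ :: b) a.length]

theorem Ncount_zero_cons (b : List ℕ) : Ncount (0 :: b) = Ncount b := by
  rw [Ncount_eq _ 0, Ncount_eq b 1]; simp [IW]

theorem Ncount_nil : Ncount [] = 1 := by
  rw [Ncount_eq _ 0]
  have : SA (IW 0 []) = {[]} := by
    ext w
    simp only [mem_SA, IW, List.perm_nil, Finset.mem_singleton]
    constructor
    · exact fun h => h.1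
    · rintro rfl
      exact ⟨rfl, avP_replicate 0 0⟩
  simp [this]

theorem Ncount_single (x : ℕ) : Ncount [x] = 1 := by
  rw [Ncount_eq _ 0]
  have : SA (IW 0 [x]) = {List.replicate x 1} := by
    ext w
    simp only [mem_SA, IW, Finset.mem_singleton, List.append_nil, Nat.zero_add,
      List.perm_replicate]
    constructor
    · exact fun h => h.1
    · rintro rfl
      exact ⟨rfl, avP_replicate _ _⟩
  simp [this]

theorem rec_core (d : List ℕ) (m : ℕ) (hd : d ≠ []) (hpos : ∀ x ∈ d, 0 < x) :
    Ncount (d ++ [m + 1]) = 2 * Ncount d +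
      (∑ i ∈ Finset.Icc 1 (d.length - 1), Ncount (d.take i) * Ncount (d.drop i)) +
      (∑ i ∈ Finset.Icc 1 d.length, ∑ k ∈ Finset.Icc 1 (d.getD (i - 1) 0 - 1),
        Ncount (d.take (i - 1) ++ [k]) * Ncount ((d.getD (i - 1) 0 - k) :: d.drop i)) := by
  have hlen : 0 < d.length := List.length_pos_iff.2 hd
  have h1 : Ncount (d ++ [m + 1]) = ∑ j ∈ Finset.range (d.sum + 1),
      (SA ((IW 0 d).take j)).card * (SA ((IW 0 d).drop j)).card := by
    rw [Ncount_eq _ 0, IW_append, ← length_IW 0 d, ← main_step _ (d.length + 1) m (sorted_IW _ _)]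
    · simp [IW]
    · intro x hx
      have := mem_IW hx
      omega
  have h2 : ∀ i < d.length, ∑ k ∈ Finset.Icc 1 (d.getD i 0),
      (SA ((IW 0 d).take ((d.take i).sum + k))).card *
      (SA ((IW 0 d).drop ((d.take i).sum + k))).card =
      (∑ k ∈ Finset.Icc 1 (d.getD i 0 - 1),
        Ncount (d.take i ++ [k]) * Ncount ((d.getD i 0 - k) :: d.drop (i + 1))) +
      Ncount (d.take (i + 1)) * Ncount (d.drop (i + 1)) := by
    intro i hi
    have hg : d.getD i 0 = d[i] := List.getD_eq_getElem _ _ hi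
    have hp : 0 < d[i] := hpos _ (List.getElem_mem hi)
    have hd' : d = d.take i ++ d[i] :: d.drop (i + 1) := by
      rw [← List.drop_eq_getElem_cons hi, List.take_append_drop]
    have h3 : ∀ k ≤ d[i], (SA ((IW 0 d).take ((d.take i).sum + k))).card *
      (SA ((IW 0 d).drop ((d.take i).sum + k))).card =
        Ncount (d.take i ++ [k]) * Ncount ((d[i] - k) :: d.drop (i + 1)) := by
      intro k hk
      have := block_term (d.take i) (d.drop (i + 1)) d[i] k hk
      rwa [← hd'] at this
    rw [hg]
    obtain ⟨y, hy⟩ : ∃ y, d[i] = y + 1 := ⟨d[i] - 1, by omega⟩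
    rw [Finset.sum_congr rfl (fun k hk => h3 k (Finset.mem_Icc.1 hk).2)]
    have ht : d.take (i + 1) = d.take i ++ [d[i]] := by simp
    rw [ht, hy, Finset.sum_Icc_succ_top (by omega)]
    simp [Ncount_zero_cons]
  rw [h1, sum_blocks, Finset.sum_congr rfl (fun i hi => h2 i (Finset.mem_range.1 hi)),
    Finset.sum_add_distrib]
  rw [sum_Icc_shift _ (d.length - 1), sum_Icc_shift _ d.length]
  obtain ⟨r, hr⟩ : ∃ r, d.length = r + 1 := ⟨d.length - 1, by omega⟩
  have h4 : ∑ i ∈ Finset.range d.length, Ncount (d.take (i + 1)) * Ncount (d.drop (i + 1)) =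
      ∑ i ∈ Finset.range (d.length - 1), Ncount (d.take (i + 1)) * Ncount (d.drop (i + 1)) +
      Ncount d := by
    have t1 : d.take (r + 1) = d := by rw [← hr]; simp
    have t2 : d.drop (r + 1) = [] := by rw [← hr]; simp
    rw [hr, Finset.sum_range_succ, t1, t2, Ncount_nil]
    simp
  have h5 : (SA ((IW 0 d).take 0)).card * (SA ((IW 0 d).drop 0)).card = Ncount d := by
    have : (SA []).card = 1 := by rw [← Ncount_nil, Ncount_eq _ 0]; simp [IW]
    simp [this, ← Ncount_eq]
  rw [h4, h5]
  simp only [Nat.add_sub_cancel]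
  ring

/-- `N(c₁) = 1` for every positive integer `c₁`, and for `n ≥ 2` and positive
integers `c₁, …, c_n`:
`N(c₁, …, c_n) = 2 N(c₁, …, c_{n-1}) + ∑_{i=1}^{n-2} N(c₁, …, c_i) N(c_{i+1}, …, c_{n-1})
+ ∑_{i=1}^{n-1} ∑_{k=1}^{c_i - 1} N(c₁, …, c_{i-1}, k) N(c_i - k, c_{i+1}, …, c_{n-1})`. -/
theorem Ncount_recurrence :
    (∀ c₁ : ℕ, 1 ≤ c₁ → Ncount [c₁] = 1) ∧
    (∀ c : List ℕ, 2 ≤ c.length → (∀ x ∈ c, 0 < x) →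
      Ncount c =
        2 * Ncount (c.take (c.length - 1)) +
        (∑ i ∈ Finset.Icc 1 (c.length - 2),
          Ncount (c.take i) * Ncount ((c.drop i).take (c.length - 1 - i))) +
        (∑ i ∈ Finset.Icc 1 (c.length - 1),
          ∑ k ∈ Finset.Icc 1 (c.getD (i - 1) 0 - 1),
            Ncount (c.take (i - 1) ++ [k]) *
              Ncount ((c.getD (i - 1) 0 - k) :: (c.drop i).take (c.length - 1 - i)))) := by
  refine ⟨fun c₁ _ => Ncount_single c₁, ?_⟩
  intro c hlen hpos
  rcases List.eq_nil_or_concat c with rfl | ⟨d, x, rfl⟩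
  · simp at hlen
  have hx : 0 < x := hpos x (by simp)
  obtain ⟨m, rfl⟩ : ∃ m, x = m + 1 := ⟨x - 1, by omega⟩
  simp only [List.concat_eq_append] at *
  have hd : d ≠ [] := by rintro rfl; simp at hlen
  have hl : (d ++ [m + 1]).length = d.length + 1 := by simp
  rw [rec_core d m hd (fun x hx => hpos x (by simp [hx])), hl]
  have hdrop : ∀ i ≤ d.length,
      ((d ++ [m + 1]).drop i).take (d.length + 1 - 1 - i) = d.drop i := by
    intro i hi
    rw [List.drop_append_of_le_length hi]
    exact List.take_left' (by simp)
  have htake : ∀ i ≤ d.length, (d ++ [m + 1]).take i = d.take i := fun i hi =>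
    List.take_append_of_le_length hi
  congr 1
  · congr 1
    · simp
    · refine Finset.sum_congr rfl fun i hi => ?_
      have := Finset.mem_Icc.1 hi
      rw [hdrop i (by omega), htake i (by omega)]
  · refine Finset.sum_congr rfl fun i hi => ?_
    have := Finset.mem_Icc.1 hi
    rw [hdrop i (by omega), htake (i - 1) (by omega), List.getD_append _ _ _ _ (by omega)]
end

section
/- For all positive integers ℓ and n, the number of words in W_{(ℓ,ℓ,…,ℓ)} (with n entries all equal to ℓ, i.e., ℓ-uniform words on the alphabet {1,…,n}) that avoid both of the patterns 231 and 221 equals the (ℓ+1)-Catalan number (1/(ℓn+1))·binom((ℓ+1)n, n). -/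
namespace UW

def Av (w : List ℕ) : Prop := ∀ x y z, List.Sublist [x, y, z] w → z < x → y < x

def B (l : ℕ) : ℕ → List ℕ
  | 0 => []
  | n + 1 => (List.replicate l 1 ++ B l n).map (· + 1)

def D (w : List ℕ) (j : ℕ) : Prop :=
  ∃ u v, w = u ++ v ∧ u.length = j ∧ u.Pairwise (· > ·) ∧ 1 ∉ u

def X (l n c j : ℕ) : Set (List ℕ) :=
  {w | w.Perm (List.replicate c 1 ++ B l n) ∧ Av w ∧ D w j}

lemma X_finite (l n c j : ℕ) : (X l n c j).Finite := by
  apply Set.Finite.subset (List.finite_toSet (List.replicate c 1 ++ B l n).permutations)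
  intro w hw
  simpa using hw.1

lemma B_ge (l n : ℕ) : ∀ x ∈ B l n, 2 ≤ x := by
  induction n with
  | zero => simp [B]
  | succ n ih =>
    intro x hx
    simp only [B, List.mem_map, List.mem_append, List.mem_replicate] at hx
    obtain ⟨y, hy, rfl⟩ := hx
    rcases hy with hy | hy
    · omega
    · have := ih y hy; omega

lemma perm_ge {l n c : ℕ} {w : List ℕ} (h : w.Perm (List.replicate c 1 ++ B l n)) :
    ∀ x ∈ w, 1 ≤ x := by
  intro x hx
  have := h.mem_iff.1 hx
  simp only [List.mem_append, List.mem_replicate] at this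
  rcases this with h | h
  · omega
  · have := B_ge l n x h; omega

lemma sub3 (x y z : ℕ) (u v : List ℕ) (h : List.Sublist [x,y,z] (u ++ 1 :: v)) :
    List.Sublist [x,y,z] (u ++ v) ∨ x = 1 ∨ (x ∈ u ∧ y = 1) ∨ (List.Sublist [x,y] u ∧ z = 1) := by
  induction u with
  | nil =>
    simp only [List.nil_append] at h ⊢
    cases h with
    | cons _ h => exact Or.inl h
    | cons_cons _ h => simp
  | cons a u ih =>
    simp only [List.cons_append] at h ⊢
    cases h with
    | cons _ h =>
      rcases ih h with h | h | h | h
      · exact Or.inl (h.cons _)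
      · simp [h]
      · simp [h.1, h.2]
      · exact Or.inr (Or.inr (Or.inr ⟨h.1.cons _, h.2⟩))
    | cons_cons _ h =>
      -- [y,z] sublist of u ++ 1 :: v
      have h2 : List.Sublist [y,z] (u ++ v) ∨ y = 1 ∨ (y ∈ u ∧ z = 1) := by
        clear ih
        induction u with
        | nil =>
          simp only [List.nil_append] at h ⊢
          cases h with
          | cons _ h => exact Or.inl h
          | cons_cons _ h => simp
        | cons b u ih =>
          simp only [List.cons_append] at h ⊢
          cases h with
          | cons _ h =>
            rcases ih h with h | h | h
            · exact Or.inl (h.cons _)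
            · simp [h]
            · simp [h.1, h.2]
          | cons_cons _ h =>
            have := List.singleton_sublist.1 h
            simp only [List.mem_append, List.mem_cons] at this
            rcases this with h | h | h
            · left; apply List.Sublist.cons_cons; simp [h]
            · simp [h]
            · left; apply List.Sublist.cons_cons; simp [h]
      rcases h2 with h | h | h
      · exact Or.inl (h.cons_cons _)
      · simp [h]
      · right; right; right
        exact ⟨List.Sublist.cons_cons _ (by simpa using h.1), h.2⟩

lemma Av_insert {u v : List ℕ} (hge : ∀ x ∈ u ++ v, 1 ≤ x) (hu : 1 ∉ u)
    (hp : u.Pairwise (· > ·)) (h : Av (u ++ v)) : Av (u ++ 1 :: v) := by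
  intro x y z hs hzx
  have hz : 1 ≤ z := by
    have : z ∈ u ++ 1 :: v := hs.subset (by simp)
    simp only [List.mem_append, List.mem_cons] at this hge
    rcases this with h | h | h
    · exact hge z (Or.inl h)
    · omega
    · exact hge z (Or.inr h)
  rcases sub3 x y z u v hs with h' | h' | h' | h'
  · exact h x y z h' hzx
  · omega
  · omega
  · have := hp.sublist h'.1
    simpa using this

lemma Av_sub {w w' : List ℕ} (hs : w'.Sublist w) (h : Av w) : Av w' :=
  fun x y z h3 => h x y z (h3.trans hs)

/-- progress lemma -/
lemma progress {u v : List ℕ} (hge : ∀ x ∈ u ++ v, 1 ≤ x) (hu : 1 ∉ u)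
    (hp : u.Pairwise (· > ·)) (h : Av (u ++ v)) (h1 : 1 ∈ u ++ v) :
    ∃ x t, v = x :: t ∧ (u ++ [x]).Pairwise (· > ·) := by
  have h1v : 1 ∈ v := by
    rcases List.mem_append.1 h1 with h | h
    · exact absurd h hu
    · exact h
  cases v with
  | nil => simp at h1v
  | cons x t =>
    refine ⟨x, t, rfl, ?_⟩
    rw [List.pairwise_append]
    refine ⟨hp, by simp, ?_⟩
    intro a ha b hb
    simp only [List.mem_singleton] at hb
    subst hb
    have ha1 : 1 ≤ a := hge a (by simp [ha])
    have ha2 : a ≠ 1 := fun h => hu (h ▸ ha)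
    rcases List.mem_cons.1 h1v with h' | h'
    · change b < a; omega
    · refine h a b 1 ?_ (by omega)
      have e1 : List.Sublist [a] u := by simpa using ha
      have e2 : List.Sublist [b, 1] (b :: t) := List.Sublist.cons_cons _ (by simpa using h')
      exact e1.append e2

lemma step (l n c j : ℕ) :
    (X l n (c+1) j).ncard = (X l n c j).ncard + (X l n (c+1) (j+1)).ncard := by
  have hE : X l n (c+1) j =
      (fun w : List ℕ => w.take j ++ 1 :: w.drop j) '' X l n c j ∪ X l n (c+1) (j+1) := by
    ext w
    constructor
    · rintro ⟨hw, ha, u, v, rfl, hl, hp, hu⟩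
      have h1 : 1 ∈ u ++ v := hw.mem_iff.2 (by simp)
      obtain ⟨x, t, rfl, hx⟩ := progress (perm_ge hw) hu hp ha h1
      by_cases h : x = 1
      · left
        subst h
        refine ⟨u ++ t, ⟨?_, ?_, u, t, rfl, hl, hp, hu⟩, ?_⟩
        · have := (List.perm_middle (a := 1) (l₁ := u) (l₂ := t)).symm.trans hw
          rw [List.replicate_succ, List.cons_append] at this
          exact this.cons_inv
        · exact Av_sub (by simp) ha
        · simp [← hl]
      · right
        refine ⟨hw, ha, u ++ [x], t, by simp, by simp [hl], hx, ?_⟩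
        simp [hu]; omega
    · rintro (⟨w, ⟨hw, ha, u, v, rfl, hl, hp, hu⟩, rfl⟩ | ⟨hw, ha, u, v, rfl, hl, hp, hu⟩)
      · subst hl
        simp only [List.take_left, List.drop_left]
        refine ⟨?_, Av_insert (perm_ge hw) hu hp ha, u, _, rfl, rfl, hp, hu⟩
        rw [List.replicate_succ, List.cons_append]
        exact List.perm_middle.trans (hw.cons 1)
      · refine ⟨hw, ha, u.take j, u.drop j ++ v, by simp [← List.append_assoc], by simp [hl],
          hp.sublist (List.take_sublist _ _), fun h => hu (List.mem_of_mem_take h)⟩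
  rw [hE, Set.ncard_union_eq ?_ ((X_finite l n c j).image _) (X_finite _ _ _ _),
    Set.ncard_image_of_injOn]
  · rintro a ⟨_, _, u, v, rfl, hl, _, _⟩ b ⟨_, _, u', v', rfl, hl', _, _⟩ h
    have e1 : List.take j (u ++ v) = u := by simp [← hl]
    have e2 : List.drop j (u ++ v) = v := by simp [← hl]
    have e3 : List.take j (u' ++ v') = u' := by simp [← hl']
    have e4 : List.drop j (u' ++ v') = v' := by simp [← hl']
    simp only [e1, e2, e3, e4] at h
    have := List.append_inj h (hl.trans hl'.symm)
    rw [this.1, (List.cons.inj this.2).2]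
  · rw [Set.disjoint_left]
    rintro _ ⟨w, ⟨_, _, u, v, rfl, hl, _, _⟩, rfl⟩ ⟨_, _, u', v', h, hl', _, hu'⟩
    have e1 : List.take j (u ++ v) = u := by simp [← hl]
    have e2 : List.drop j (u ++ v) = v := by simp [← hl]
    simp only [e1, e2] at h
    have : u ++ [1] = u' := by
      refine (List.append_inj (t₁ := v) (t₂ := v') ?_ (by simp [hl, hl'])).1
      simpa using h
    exact hu' (by simp [← this])

lemma Av_map {w : List ℕ} : Av (w.map (· + 1)) ↔ Av w := by
  constructor
  · intro h x y z hs hz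
    have := h (x+1) (y+1) (z+1) (by simpa using hs.map (· + 1)) (by omega)
    omega
  · intro h x y z hs hz
    obtain ⟨w', h1, h2⟩ := List.sublist_map_iff.1 hs
    match w', h2 with
    | [a, b, c], h2 =>
      simp only [List.map_cons, List.map_nil, List.cons.injEq, and_true] at h2
      have := h a b c h1 (by omega)
      omega

lemma inj_map : Function.Injective (fun w : List ℕ => w.map (· + 1)) :=
  List.map_injective_iff.2 (add_left_injective 1)

/-- perm with a mapped list means being mapped -/
lemma perm_map {w L : List ℕ} (h : w.Perm (L.map (· + 1))) :
    ∃ w' : List ℕ, w = w'.map (· + 1) ∧ w'.Perm L := by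
  have hw : w = (w.map (· - 1)).map (· + 1) := by
    rw [List.map_map]
    symm
    refine (List.map_congr_left (g := id) ?_).trans (List.map_id _)
    intro x hx
    have := h.mem_iff.1 hx
    simp only [List.mem_map] at this
    obtain ⟨y, _, rfl⟩ := this
    simp
  refine ⟨_, hw, ?_⟩
  have := h.map (· - 1)
  rw [List.map_map] at this
  refine this.trans (List.Perm.of_eq ?_)
  refine (List.map_congr_left (g := id) ?_).trans (List.map_id _)
  intro x hx
  simp

lemma shift0 (l n : ℕ) : (X l (n+1) 0 0).ncard = (X l n l 0).ncard := by
  rw [← Set.ncard_image_of_injective (X l n l 0) inj_map]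
  congr 1
  ext w
  constructor
  · rintro ⟨hw, ha, _⟩
    simp only [List.replicate_zero, List.nil_append, B] at hw
    obtain ⟨w, rfl, hw'⟩ := perm_map hw
    exact ⟨w, ⟨hw', Av_map.1 ha, [], w, by simp⟩, rfl⟩
  · rintro ⟨w, ⟨hw, ha, _⟩, rfl⟩
    exact ⟨by simpa [B] using hw.map (· + 1), Av_map.2 ha, [], _, by simp; rfl⟩

lemma shift1 (l n j : ℕ) (hl : 1 ≤ l) :
    (X l (n+1) 0 (j+1)).ncard = (X l n l j).ncard := by
  rw [← Set.ncard_image_of_injective (X l n l j) inj_map]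
  congr 1
  ext w
  constructor
  · rintro ⟨hw, ha, u, v, he, hl, hp, hu⟩
    simp only [List.replicate_zero, List.nil_append, B] at hw
    obtain ⟨w, rfl, hw'⟩ := perm_map hw
    obtain ⟨u', v', rfl, rfl, rfl⟩ := List.map_eq_append_iff.1 he
    refine ⟨_, ⟨hw', Av_map.1 ha, ?_⟩, rfl⟩
    rcases List.eq_nil_or_concat u' with rfl | ⟨u, x, rfl⟩
    · simp at hl
    · rw [List.pairwise_map] at hp
      simp only [List.concat_eq_append] at *
      rw [List.pairwise_append] at hp
      refine ⟨u, x :: v', by simp, by simpa using hl, hp.1.imp (by intros; omega), ?_⟩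
      intro h1
      have := hp.2.2 1 h1 x (by simp)
      have := perm_ge hw' x (by simp)
      omega
  · rintro ⟨w, ⟨hw, ha, u, v, rfl, hj, hp, hu⟩, rfl⟩
    have h1 : 1 ∈ u ++ v := hw.mem_iff.2 (by simp; omega)
    obtain ⟨x, t, rfl, hx⟩ := progress (perm_ge hw) hu hp ha h1
    refine ⟨by simpa [B] using hw.map (· + 1), Av_map.2 ha, (u ++ [x]).map (· + 1), t.map (· + 1),
      by simp, by simp [hj], ?_, ?_⟩
    · rw [List.pairwise_map]
      exact hx.imp (by intros; omega)
    · intro h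
      obtain ⟨y, hy, hy'⟩ := List.mem_map.1 h
      have := perm_ge hw y (by simp only [List.mem_append, List.mem_cons, List.mem_singleton, List.not_mem_nil, or_false] at hy ⊢; tauto)
      omega

def G (l N : ℕ) : ℕ → ℤ
  | 0 => 1
  | s + 1 => ((N + s).choose (s+1) : ℤ) - l * ((N + s).choose s : ℤ)

lemma G_rec (l N s : ℕ) : G l (N+1) (s+1) = G l N (s+1) + G l (N+1) s := by
  cases s with
  | zero => simp [G]; ring
  | succ s =>
    simp only [G]
    have e1 : (N + 1 + (s+1)).choose (s+1+1) = (N + (s+1)).choose (s+1) + (N+(s+1)).choose (s+1+1) := by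
      rw [show N + 1 + (s+1) = (N + (s+1)) + 1 by ring, Nat.choose_succ_succ]
    have e2 : (N + 1 + (s+1)).choose (s+1) = (N + (s+1)).choose s + (N+(s+1)).choose (s+1) := by
      rw [show N + 1 + (s+1) = (N + (s+1)) + 1 by ring, Nat.choose_succ_succ]
    rw [e1, e2, show N + 1 + s = N + (s+1) by ring]
    push_cast
    ring

def H (l n N j : ℕ) : ℤ := if j ≤ n then G l N (n - j) else 0

lemma H_rec (l n N j : ℕ) : H l n (N+1) j = H l n N j + H l n (N+1) (j+1) := by
  unfold H
  rcases lt_trichotomy j n with h | h | h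
  · rw [if_pos h.le, if_pos h.le, if_pos (by omega)]
    obtain ⟨s, rfl⟩ := Nat.exists_eq_add_of_lt h
    rw [show j + s + 1 - j = s + 1 by omega, show j + s + 1 - (j+1) = s by omega, G_rec]
  · subst h; simp [G]
  · rw [if_neg (by omega), if_neg (by omega), if_neg (by omega)]; simp

lemma G_zero (l m : ℕ) : G l (l * (m+1)) (m+1) = 0 := by
  simp only [G]
  have h := Nat.choose_succ_right_eq (l * (m+1) + m) m
  rw [show l * (m+1) + m - m = l * (m+1) by omega] at h
  have h' : ((l * (m+1) + m).choose (m+1) : ℤ) * (m+1) = (l * (m+1) + m).choose m * (l * (m+1)) := by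
    exact_mod_cast h
  have : (m + 1 : ℤ) ≠ 0 := by positivity
  apply mul_right_cancel₀ this
  linear_combination h'

lemma closed (l : ℕ) (hl : 1 ≤ l) (n : ℕ) : ∀ c j, ((X l n c j).ncard : ℤ) = H l n (l*n + c + 1) j := by
  have main : ∀ n, (∀ j, ((X l n 0 j).ncard : ℤ) = H l n (l*n + 0 + 1) j) →
      ∀ c j, ((X l n c j).ncard : ℤ) = H l n (l*n + c + 1) j := by
    intro n h0 c
    induction c with
    | zero => exact h0
    | succ c ih =>
      have big : ∀ j, (List.replicate (c+1) 1 ++ B l n).length < j → (X l n (c+1) j).ncard = 0 := by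
        intro j hj
        have : X l n (c+1) j = ∅ := by
          apply Set.eq_empty_of_forall_notMem
          rintro w ⟨hw, _, u, v, rfl, hu, _⟩
          have := hw.length_eq
          rw [List.length_append] at this
          omega
        rw [this, Set.ncard_empty]
      have : ∀ d j, (List.replicate (c+1) 1 ++ B l n).length + n < j + d →
          ((X l n (c+1) j).ncard : ℤ) = H l n (l*n + (c+1) + 1) j := by
        intro d
        induction d with
        | zero =>
          intro j hj
          rw [big j (by omega), H, if_neg (by omega)]; simp
        | succ d ihd =>
          intro j hj
          rw [step, Nat.cast_add, ih, ihd (j+1) (by omega), ← add_assoc (l*n) c 1, H_rec l n (l*n+c+1) j]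
      intro j
      exact this _ j (Nat.lt_add_left j (Nat.lt_succ_self _))
  induction n with
  | zero =>
    apply main
    intro j
    cases j with
    | zero =>
      have : X l 0 0 0 = {[]} := by
        ext w
        simp only [X, B, Set.mem_setOf_eq, Set.mem_singleton_iff, List.replicate_zero, List.append_nil, List.perm_nil]
        constructor
        · exact fun h => h.1
        · rintro rfl
          exact ⟨rfl, fun x y z h => by simp at h, [], [], by simp⟩
      simp [this, H, G]
    | succ j =>
      have : X l 0 0 (j+1) = ∅ := by
        apply Set.eq_empty_of_forall_notMem
        rintro w ⟨hw, _, u, v, rfl, hu, _⟩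
        have := hw.length_eq
        simp [B] at this
        simp [this] at hu
      simp [this, H]
  | succ n ih =>
    apply main
    intro j
    cases j with
    | zero =>
      rw [shift0, ih]
      simp only [H, Nat.zero_le, if_true, Nat.sub_zero, Nat.add_zero]
      rw [G_rec, G_zero, zero_add]
      rfl
    | succ j =>
      rw [shift1 l n j hl, ih]
      simp only [H, Nat.add_le_add_iff_right, Nat.add_sub_add_right]
      rfl

lemma count_B (l n i : ℕ) : (B l n).count (i + 2) = if i < n then l else 0 := by
  induction n generalizing i with
  | zero => simp [B]
  | succ n ih =>
    rw [B, show i + 2 = (fun x => x + 1) (i+1) from rfl,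
      List.count_map_of_injective _ _ (add_left_injective 1), List.count_append,
      List.count_replicate]
    cases i with
    | zero =>
      have : (B l n).count (0 + 1) = 0 := by
        rw [List.count_eq_zero]
        intro h
        have := B_ge l n _ h
        omega
      rw [this]; simp
    | succ i =>
      rw [ih]; simp

lemma InW_iff (l n : ℕ) (w : List ℕ) :
    InW (List.replicate n l) w ↔ (w.map (· + 1)).Perm (B l n) := by
  have hc : ∀ i, (w.map (· + 1)).count (i+1) = w.count i := fun i =>
    List.count_map_of_injective w (· + 1) (add_left_injective 1) i
  have hg : ∀ i, (List.replicate n l).getD i 0 = if i < n then l else 0 := by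
    intro i
    by_cases h : i < n
    · simp [List.getD, h]
    · simp [List.getD, h]
  have hB0 : (B l n).count 0 = 0 := by
    rw [List.count_eq_zero]; intro h; have := B_ge l n _ h; omega
  have hB1 : (B l n).count 1 = 0 := by
    rw [List.count_eq_zero]; intro h; have := B_ge l n _ h; omega
  rw [List.perm_iff_count]
  unfold InW
  constructor
  · rintro ⟨h0, h⟩ a
    match a with
    | 0 => rw [hB0, List.count_eq_zero]; simp
    | 1 => rw [hB1, hc 0, List.count_eq_zero]; exact h0
    | i + 2 => rw [count_B, hc (i+1), h, hg]
  · intro h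
    refine ⟨?_, fun i => ?_⟩
    · rw [← List.count_eq_zero, ← hc, h, hB1]
    · rw [← hc, h, count_B, hg]

lemma Av_iff (w : List ℕ) : (¬Contains231 w ∧ ¬Contains221 w) ↔ Av w := by
  constructor
  · rintro ⟨h1, h2⟩ x y z hs hz
    by_contra hxy
    obtain ⟨f, hf⟩ := List.sublist_iff_exists_orderEmbedding_getElem?_eq.1 hs
    have f0 := hf 0
    have f1 := hf 1
    have f2 := hf 2
    simp only [List.getElem?_cons_zero, List.getElem?_cons_succ] at f0 f1 f2
    have a1 : f 0 < f 1 := f.lt_iff_lt.2 (by norm_num)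
    have a2 : f 1 < f 2 := f.lt_iff_lt.2 (by norm_num)
    have a3 : f 2 < w.length := (List.getElem?_eq_some_iff.1 f2.symm).1
    have e0 : w.getD (f 0) 0 = x := by simp [List.getD, ← f0]
    have e1 : w.getD (f 1) 0 = y := by simp [List.getD, ← f1]
    have e2 : w.getD (f 2) 0 = z := by simp [List.getD, ← f2]
    rcases lt_or_eq_of_le (not_lt.1 hxy) with h | h
    · exact h1 ⟨_, _, _, a1, a2, a3, by rw [e0, e2]; exact hz, by rw [e0, e1]; exact h⟩
    · exact h2 ⟨_, _, _, a1, a2, a3, by rw [e0, e2]; exact hz, by rw [e0, e1]; exact h⟩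
  · intro h
    have key : ∀ a b c, a < b → b < c → c < w.length → w.getD c 0 < w.getD a 0 →
        w.getD b 0 < w.getD a 0 := by
      intro a b c hab hbc hc
      refine h _ _ _ ?_
      have hp : List.Pairwise (· < ·) [(⟨a, by omega⟩ : Fin w.length), ⟨b, by omega⟩, ⟨c, hc⟩] := by
        simp; omega
      have := List.map_getElem_sublist (l := w) hp
      simpa [List.getD, hc, (by omega : a < w.length), (by omega : b < w.length)] using this
    constructor
    · rintro ⟨a, b, c, h1, h2, h3, h4, h5⟩
      have := key a b c h1 h2 h3 h4; omega
    · rintro ⟨a, b, c, h1, h2, h3, h4, h5⟩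
      have := key a b c h1 h2 h3 h4; omega

end UW

/-- For all positive integers `ℓ` and `n`, the number of `ℓ`-uniform words on the
alphabet `{1, …, n}` that avoid the patterns `231` and `221` is the
`(ℓ+1)`-Catalan number `(1 / (ℓn + 1)) * binom((ℓ+1)n, n)`. -/
theorem uniform_words_count (ell n : ℕ) (hell : 1 ≤ ell) (hn : 1 ≤ n) :
    (ell * n + 1) *
      {w : List ℕ | InW (List.replicate n ell) w ∧
        ¬Contains231 w ∧ ¬Contains221 w}.ncard =
    Nat.choose ((ell + 1) * n) n := by
  have hE : (fun w : List ℕ => w.map (· + 1)) '' {w : List ℕ | InW (List.replicate n ell) w ∧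
        ¬Contains231 w ∧ ¬Contains221 w} = UW.X ell n 0 0 := by
    obtain ⟨m, rfl⟩ : ∃ m, n = m + 1 := ⟨n - 1, by omega⟩
    ext w
    constructor
    · rintro ⟨w, ⟨h1, h2⟩, rfl⟩
      exact ⟨by simpa using (UW.InW_iff _ _ _).1 h1, UW.Av_map.2 ((UW.Av_iff _).1 h2),
        [], _, by simp; rfl⟩
    · rintro ⟨hw, ha, _⟩
      simp only [List.replicate_zero, List.nil_append] at hw
      obtain ⟨w, rfl, -⟩ := UW.perm_map hw
      exact ⟨w, ⟨(UW.InW_iff _ _ _).2 hw, (UW.Av_iff _).2 (UW.Av_map.1 ha)⟩, rfl⟩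
  rw [← Set.ncard_image_of_injective _ UW.inj_map, hE]
  have h := UW.closed ell hell n 0 0
  obtain ⟨m, rfl⟩ : ∃ m, n = m + 1 := ⟨n - 1, by omega⟩
  simp only [UW.H, Nat.zero_le, if_true, Nat.sub_zero, Nat.add_zero, UW.G] at h
  rw [show ell * (m+1) + 1 + m = (ell+1) * (m+1) by ring] at h
  have h2 := Nat.choose_succ_right_eq ((ell+1) * (m+1)) m
  rw [show (ell+1) * (m+1) - m = ell * (m+1) + 1 by
    rw [show (ell+1) * (m+1) = ell * (m+1) + 1 + m by ring]; omega] at h2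
  zify at h2 ⊢
  rw [h]
  linear_combination (ell : ℤ) * h2
end
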